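/- arXiv:2107.04319 — 2 statements merged into one kernel-verified Lean document; each statement's English description precedes it below -/
import Mathlib

section
/- Let A ∈ ℝ^{m×n}, y ∈ ℝ^m, let x* ∈ ℝⁿ be k-sparse with S = supp(x*) and set η = y − Ax*. Let δ₁ and δ₂ be restricted isometry constants of orders k and 2k for A with δ₂ < 1. Let u ∈ ℝⁿ, let w̄ ∈ ℝⁿ with eᵀw̄ = k and 0 ≤ w̄ ≤ e minimize ‖y − A(w ⊗ u)‖₂² over all w with eᵀw = k and 0 ≤ w ≤ e, let S' be the support of a hard thresholding of w̄ ⊗ u at level k, and let h be a hard thresholding of u − x* at level k. Then for every w* ∈ {0,1}ⁿ with eᵀw* = k and S ⊆ supp(w*): ‖(x* − u ⊗ w̄)_{S∪S'}‖₂ ≤ √((1+δ₁)/(1−δ₂))·‖(x* − u) ⊗ w*‖₂ + (2/√(1−δ₂))·‖η‖₂ + 2√((1+δ₁)/(1−δ₂))·‖h‖₂. -/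
/-! The residual `xs - u ⊗ w` is split along `U = supp xs ∪ S'`, which has at most `2k` indices, so
the lower restricted isometry bound applies to its restriction to `U`. The image of the whole
residual under `A` is controlled by optimality of `w` against the competitor `ws`, for which
`xs - u ⊗ ws = (xs - u) ⊗ ws` is `k`-sparse; this costs `‖η‖` twice.

Off `U` the residual equals `-(u - xs) ⊗ w`. The map sending `w` to the norm of
`A ((u - xs)_{Uᶜ} ⊗ w)` is convex, so on the hypersimplex `0 ≤ w ≤ 1`, `∑ w = k` it is bounded by
its largest value at a vertex (`hypersimplex_bound`). A vertex is the indicator of a `k`-subset,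
where the upper restricted isometry bound applies, and no `k`-subset captures more energy of
`u - xs` than the support of a hard thresholding (`IsHT.sum_sq_le`). This argument bounds the
off-`U` part by `√(1 + δ₁) ‖h‖`, half of the stated term. -/

open Matrix Finset Filter

/-- Euclidean (ℓ₂) norm of a vector. -/
noncomputable def nrm {n : ℕ} (x : Fin n → ℝ) : ℝ := Real.sqrt (∑ i, x i ^ 2)

/-- A vector is `s`-sparse if it has at most `s` nonzero entries. -/
def sparse {n : ℕ} (s : ℕ) (x : Fin n → ℝ) : Prop :=
  ((Finset.univ : Finset (Fin n)).filter fun i => x i ≠ 0).card ≤ s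

/-- Support of a vector, as a finset. -/
noncomputable def suppF {n : ℕ} (x : Fin n → ℝ) : Finset (Fin n) :=
  (Finset.univ : Finset (Fin n)).filter fun i => x i ≠ 0

/-- Restriction of a vector to an index set (zero outside). -/
def restr {n : ℕ} (x : Fin n → ℝ) (Ω : Finset (Fin n)) : Fin n → ℝ :=
  fun i => if i ∈ Ω then x i else 0

/-- `δ ∈ [0,1)` is a restricted isometry constant of order `s` for `A`. -/
def RIC {m n : ℕ} (A : Matrix (Fin m) (Fin n) ℝ) (s : ℕ) (δ : ℝ) : Prop :=
  0 ≤ δ ∧ δ < 1 ∧ ∀ x : Fin n → ℝ, sparse s x →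
    (1 - δ) * nrm x ^ 2 ≤ nrm (A.mulVec x) ^ 2 ∧
      nrm (A.mulVec x) ^ 2 ≤ (1 + δ) * nrm x ^ 2

/-- `h` is a hard thresholding of `z` at level `q` with support `Ω`. -/
def IsHT {n : ℕ} (q : ℕ) (z h : Fin n → ℝ) (Ω : Finset (Fin n)) : Prop :=
  Ω.card = q ∧ (∀ i ∈ Ω, h i = z i) ∧ (∀ i ∉ Ω, h i = 0) ∧
    ∀ i ∈ Ω, ∀ j ∉ Ω, |z j| ≤ |z i|

/-! ### The Euclidean norm -/

lemma nrm_eq_norm {n : ℕ} (x : Fin n → ℝ) : nrm x = ‖WithLp.toLp 2 x‖ := by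
  simp [nrm, EuclideanSpace.norm_eq]

lemma nrm_nonneg {n : ℕ} (x : Fin n → ℝ) : 0 ≤ nrm x := Real.sqrt_nonneg _

lemma nrm_sq {n : ℕ} (x : Fin n → ℝ) : nrm x ^ 2 = ∑ i, x i ^ 2 :=
  Real.sq_sqrt (Finset.sum_nonneg fun _ _ => sq_nonneg _)

lemma nrm_add_le {n : ℕ} (x y : Fin n → ℝ) : nrm (x + y) ≤ nrm x + nrm y := by
  simp only [nrm_eq_norm, WithLp.toLp_add]
  exact norm_add_le _ _

lemma nrm_sub_le {n : ℕ} (x y : Fin n → ℝ) : nrm (x - y) ≤ nrm x + nrm y := by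
  simp only [nrm_eq_norm, WithLp.toLp_sub]
  exact norm_sub_le _ _

lemma nrm_smul_nonneg {n : ℕ} {a : ℝ} (ha : 0 ≤ a) (x : Fin n → ℝ) :
    nrm (a • x) = a * nrm x := by
  simp only [nrm_eq_norm, WithLp.toLp_smul, norm_smul, Real.norm_eq_abs, abs_of_nonneg ha]

/-! ### Convex functions on the hypersimplex -/

/-- The coordinates at which `w` takes a value other than `0` and `1`. -/
noncomputable def fracF {n : ℕ} (w : Fin n → ℝ) : Finset (Fin n) :=
  Finset.univ.filter fun i => w i ≠ 0 ∧ w i ≠ 1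

/-- Mass can be transferred from one fractional coordinate to another until one of the two
becomes `0` or `1`. -/
lemma exists_transfer {n : ℕ} (w : Fin n → ℝ) (hw : ∀ i, 0 ≤ w i ∧ w i ≤ 1) (i j : Fin n)
    (hij : i ≠ j) (hi : i ∈ fracF w) (hj : j ∈ fracF w) :
    ∃ s : ℝ, 0 < s ∧
      (∀ l, 0 ≤ (w + s • (Pi.single i 1 - Pi.single j 1 : Fin n → ℝ)) l ∧
        (w + s • (Pi.single i 1 - Pi.single j 1 : Fin n → ℝ)) l ≤ 1) ∧
      ∑ l, (w + s • (Pi.single i 1 - Pi.single j 1 : Fin n → ℝ)) l = ∑ l, w l ∧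
      (fracF (w + s • (Pi.single i 1 - Pi.single j 1 : Fin n → ℝ))).card < (fracF w).card := by
  simp only [fracF, Finset.mem_filter, Finset.mem_univ, true_and] at hi hj
  have hi1 : w i < 1 := lt_of_le_of_ne (hw i).2 hi.2
  have hj0 : 0 < w j := lt_of_le_of_ne (hw j).1 (Ne.symm hj.1)
  set s := min (1 - w i) (w j) with hs
  have hs1 : s ≤ 1 - w i := min_le_left _ _
  have hs2 : s ≤ w j := min_le_right _ _
  have hs0 : 0 < s := lt_min (by linarith) hj0
  set p : Fin n → ℝ := w + s • (Pi.single i 1 - Pi.single j 1) with hp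
  have pi : p i = w i + s := by simp [hp, hij]
  have pj : p j = w j - s := by simp [hp, hij.symm]; ring
  have pl : ∀ l, l ≠ i → l ≠ j → p l = w l := by
    intro l h1 h2; simp [hp, h1, h2]
  refine ⟨s, hs0, ?_, ?_, ?_⟩
  · intro l
    change 0 ≤ p l ∧ p l ≤ 1
    by_cases h1 : l = i
    · subst h1; rw [pi]; constructor <;> linarith [(hw l).1]
    by_cases h2 : l = j
    · subst h2; rw [pj]; constructor <;> linarith [(hw l).2]
    rw [pl l h1 h2]; exact hw l
  · simp [Finset.sum_add_distrib, ← Finset.mul_sum]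
  · have hsub : fracF p ⊆ fracF w := by
      intro l hl
      simp only [fracF, Finset.mem_filter, Finset.mem_univ, true_and] at hl ⊢
      by_cases h1 : l = i
      · subst h1; exact hi
      by_cases h2 : l = j
      · subst h2; exact hj
      rwa [pl l h1 h2] at hl
    apply Finset.card_lt_card
    refine (Finset.ssubset_iff_of_subset hsub).2 ?_
    rcases min_choice (1 - w i) (w j) with h1 | h1
    · refine ⟨i, by simpa [fracF] using hi, ?_⟩
      have : p i = 1 := by rw [pi, hs, h1]; ring
      simp [fracF, this]
    · refine ⟨j, by simpa [fracF] using hj, ?_⟩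
      have : p j = 0 := by rw [pj, hs, h1]; ring
      simp [fracF, this]

/-- As the coordinates of `w` sum to an integer, a fractional coordinate is never alone. -/
lemma exists_second_frac {n k : ℕ} (w : Fin n → ℝ) (hw : ∀ i, 0 ≤ w i ∧ w i ≤ 1)
    (hsum : ∑ i, w i = (k : ℝ)) (i : Fin n) (hi : i ∈ fracF w) :
    ∃ j, i ≠ j ∧ j ∈ fracF w := by
  by_contra! hcon
  simp only [fracF, Finset.mem_filter, Finset.mem_univ, true_and] at hi hcon
  have h01 : ∀ j ∈ Finset.univ.erase i, w j = if w j = 1 then (1 : ℝ) else 0 := by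
    intro j hj
    have := hcon j (Finset.ne_of_mem_erase hj).symm
    by_cases h0 : w j = 0
    · simp [h0]
    · have h1 : w j = 1 := by tauto
      simp [h1]
  rw [← Finset.add_sum_erase _ _ (Finset.mem_univ i), Finset.sum_congr rfl h01,
    Finset.sum_boole] at hsum
  set c := ((Finset.univ.erase i).filter fun j => w j = 1).card
  have hi0 : 0 < w i := lt_of_le_of_ne (hw i).1 (Ne.symm hi.1)
  have hi1 : w i < 1 := lt_of_le_of_ne (hw i).2 hi.2
  have a1 : c < k := by
    have : (c : ℝ) < k := by linarith
    exact_mod_cast this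
  have a2 : k < c + 1 := by
    have : (k : ℝ) < c + 1 := by linarith
    exact_mod_cast this
  omega

/-- A convex function on the hypersimplex is bounded by its values at the indicators of
`k`-subsets. A point with a fractional coordinate lies on a segment whose endpoints have fewer
fractional coordinates. -/
lemma hypersimplex_bound {n k : ℕ} (f : (Fin n → ℝ) → ℝ) (hf : ConvexOn ℝ Set.univ f) (B : ℝ)
    (hB : ∀ T : Finset (Fin n), T.card = k → f (fun i => if i ∈ T then 1 else 0) ≤ B)
    (w : Fin n → ℝ) (hw : ∀ i, 0 ≤ w i ∧ w i ≤ 1) (hsum : ∑ i, w i = (k : ℝ)) : f w ≤ B := by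
  induction hN : (fracF w).card using Nat.strong_induction_on generalizing w with
  | _ N ih =>
    rcases (fracF w).eq_empty_or_nonempty with he | ⟨i, hi⟩
    · have h01 : w = fun i => if i ∈ Finset.univ.filter (fun i => w i = 1) then 1 else 0 := by
        funext i
        have : i ∉ fracF w := by simp [he]
        simp only [fracF, Finset.mem_filter, Finset.mem_univ, true_and] at this ⊢
        by_cases h0 : w i = 0
        · simp [h0]
        · have h1 : w i = 1 := by tauto
          simp [h1]
      have hcard : (Finset.univ.filter (fun i => w i = 1)).card = k := by
        rw [h01] at hsum
        simp only [Finset.sum_boole, Finset.filter_mem_eq_inter, Finset.univ_inter] at hsum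
        exact_mod_cast hsum
      rw [h01]
      exact hB _ hcard
    · obtain ⟨j, hij, hj⟩ := exists_second_frac w hw hsum i hi
      obtain ⟨s, hs, hp1, hp2, hp3⟩ := exists_transfer w hw i j hij hi hj
      obtain ⟨t, ht, hq1, hq2, hq3⟩ := exists_transfer w hw j i hij.symm hj hi
      have fp := ih _ (hN ▸ hp3) _ hp1 (hp2.trans hsum) rfl
      have fq := ih _ (hN ▸ hq3) _ hq1 (hq2.trans hsum) rfl
      set p := w + s • (Pi.single i 1 - Pi.single j 1 : Fin n → ℝ) with hp
      set q := w + t • (Pi.single j 1 - Pi.single i 1 : Fin n → ℝ) with hq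
      have hst : 0 < s + t := by linarith
      have hw' : w = (t / (s + t)) • p + (s / (s + t)) • q := by
        funext l
        simp only [hp, hq, Pi.add_apply, Pi.smul_apply, Pi.sub_apply, smul_eq_mul]
        field_simp
        ring
      have hsum1 : t / (s + t) + s / (s + t) = 1 := by field_simp; ring
      have := hf.2 (Set.mem_univ p) (Set.mem_univ q)
        (show 0 ≤ t / (s + t) by positivity) (show 0 ≤ s / (s + t) by positivity) hsum1
      rw [← hw'] at this
      simp only [smul_eq_mul] at this
      have e1 := mul_le_mul_of_nonneg_left fp (show 0 ≤ t / (s + t) by positivity)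
      have e2 := mul_le_mul_of_nonneg_left fq (show 0 ≤ s / (s + t) by positivity)
      calc f w ≤ _ := this
        _ ≤ t / (s + t) * B + s / (s + t) * B := add_le_add e1 e2
        _ = B := by rw [← add_mul, hsum1, one_mul]

/-! ### Hard thresholding and restricted isometry bounds -/

/-- Among index sets of size `q`, the support of a hard thresholding of `z` captures the most
energy of `z`. -/
lemma IsHT.sum_sq_le {n q : ℕ} {z h : Fin n → ℝ} {Ω : Finset (Fin n)} (hh : IsHT q z h Ω)
    (T : Finset (Fin n)) (hT : T.card = q) : ∑ i ∈ T, z i ^ 2 ≤ nrm h ^ 2 := by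
  obtain ⟨hc, h1, h2, h3⟩ := hh
  have hn : nrm h ^ 2 = ∑ i ∈ Ω, z i ^ 2 := by
    rw [nrm_sq, ← Finset.sum_subset (Finset.subset_univ Ω)]
    · exact Finset.sum_congr rfl fun i hi => by rw [h1 i hi]
    · intro i _ hi; simp [h2 i hi]
  rw [hn, ← Finset.sum_inter_add_sum_sdiff T Ω, ← Finset.sum_inter_add_sum_sdiff Ω T,
    Finset.inter_comm Ω T]
  have hcard : (T \ Ω).card = (Ω \ T).card :=
    Finset.card_sdiff_comm (hT.trans hc.symm)
  gcongr 1 with x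
  rcases (T \ Ω).eq_empty_or_nonempty with he | hne
  · rw [he]; simp only [Finset.sum_empty]
    exact Finset.sum_nonneg fun i _ => sq_nonneg _
  · obtain ⟨j, hj, hmax⟩ := Finset.exists_max_image _ (fun i => z i ^ 2) hne
    calc _ ≤ (T \ Ω).card • z j ^ 2 := Finset.sum_le_card_nsmul _ _ _ hmax
      _ = (Ω \ T).card • z j ^ 2 := by rw [hcard]
      _ ≤ _ := by
        refine Finset.card_nsmul_le_sum _ _ _ fun i hi => ?_
        exact sq_le_sq.2 (h3 i (Finset.mem_sdiff.1 hi).1 j (Finset.mem_sdiff.1 hj).2)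

lemma RIC.upper {m n s : ℕ} {A : Matrix (Fin m) (Fin n) ℝ} {δ : ℝ} (h : RIC A s δ)
    {x : Fin n → ℝ} (hx : sparse s x) : nrm (A.mulVec x) ≤ Real.sqrt (1 + δ) * nrm x := by
  have h0 : 0 ≤ 1 + δ := by linarith [h.1]
  refine (sq_le_sq₀ (nrm_nonneg _)
    (mul_nonneg (Real.sqrt_nonneg _) (nrm_nonneg _))).1 ?_
  rw [mul_pow, Real.sq_sqrt h0]
  exact (h.2.2 x hx).2

lemma RIC.lower {m n s : ℕ} {A : Matrix (Fin m) (Fin n) ℝ} {δ : ℝ} (h : RIC A s δ)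
    {x : Fin n → ℝ} (hx : sparse s x) : Real.sqrt (1 - δ) * nrm x ≤ nrm (A.mulVec x) := by
  have h0 : 0 ≤ 1 - δ := by linarith [h.2.1]
  refine (sq_le_sq₀ (mul_nonneg (Real.sqrt_nonneg _) (nrm_nonneg _))
    (nrm_nonneg _)).1 ?_
  rw [mul_pow, Real.sq_sqrt h0]
  exact (h.2.2 x hx).1

lemma sparse_of_subset {n s : ℕ} {x : Fin n → ℝ} (T : Finset (Fin n)) (hT : T.card ≤ s)
    (h : ∀ i ∉ T, x i = 0) : sparse s x := by
  refine (Finset.card_le_card fun i hi => ?_).trans hT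
  by_contra hc
  exact (Finset.mem_filter.1 hi).2 (h i hc)

/-- For an arbitrary index set `V`, the image under `A` of `z_V ⊗ w` is controlled by a hard
thresholding of `z` at level `k`. -/
lemma nrm_mulVec_off_le {m n k : ℕ} {A : Matrix (Fin m) (Fin n) ℝ} {δ : ℝ} (hA : RIC A k δ)
    {z h : Fin n → ℝ} {Ω : Finset (Fin n)} (hh : IsHT k z h Ω) (V : Finset (Fin n))
    (w : Fin n → ℝ) (hw : ∀ i, 0 ≤ w i ∧ w i ≤ 1) (hsum : ∑ i, w i = (k : ℝ)) :
    nrm (A.mulVec (fun i => restr z V i * w i)) ≤ Real.sqrt (1 + δ) * nrm h := by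
  refine hypersimplex_bound (k := k) (fun w => nrm (A.mulVec (fun i => restr z V i * w i)))
    ⟨convex_univ, ?_⟩ _ ?_ w hw hsum
  · intro p _ q _ a b ha hb _
    have : (fun i => restr z V i * (a • p + b • q) i) =
        a • (fun i => restr z V i * p i) + b • (fun i => restr z V i * q i) := by
      funext i
      simp only [Pi.add_apply, Pi.smul_apply, smul_eq_mul]; ring
    simp only [this, Matrix.mulVec_add, Matrix.mulVec_smul, smul_eq_mul]
    refine (nrm_add_le _ _).trans ?_
    rw [nrm_smul_nonneg ha, nrm_smul_nonneg hb]
  · intro T hT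
    refine (hA.upper (sparse_of_subset T hT.le fun i hi => by simp [hi])).trans ?_
    refine mul_le_mul_of_nonneg_left ?_ (Real.sqrt_nonneg _)
    refine (sq_le_sq₀ (nrm_nonneg _)
    (nrm_nonneg _)).1 ?_
    refine le_trans ?_ (hh.sum_sq_le T hT)
    rw [nrm_sq, ← Finset.sum_subset (Finset.subset_univ T) (fun i _ hi => by simp [hi])]
    refine Finset.sum_le_sum fun i hi => ?_
    by_cases hV : i ∈ V
    · simp [restr, hi, hV]
    · simp [restr, hV, sq_nonneg]

/-! ### The error bound -/

theorem stmt10 {m n : ℕ} (k : ℕ) (A : Matrix (Fin m) (Fin n) ℝ) (y : Fin m → ℝ)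
    (xs : Fin n → ℝ) (hxs : sparse k xs) (η : Fin m → ℝ) (hη : η = y - A.mulVec xs)
    (δ₁ δ₂ : ℝ) (h1 : RIC A k δ₁) (h2 : RIC A (2 * k) δ₂)
    (u w : Fin n → ℝ) (hwsum : ∑ i, w i = (k : ℝ)) (hwbd : ∀ i, 0 ≤ w i ∧ w i ≤ 1)
    (hopt : ∀ w' : Fin n → ℝ, (∑ i, w' i) = (k : ℝ) → (∀ i, 0 ≤ w' i ∧ w' i ≤ 1) →
      nrm (y - A.mulVec (fun i => w i * u i)) ^ 2 ≤
        nrm (y - A.mulVec (fun i => w' i * u i)) ^ 2)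
    (v : Fin n → ℝ) (S' : Finset (Fin n)) (hS' : IsHT k (fun i => w i * u i) v S')
    (h : Fin n → ℝ) (Ωh : Finset (Fin n)) (hh : IsHT k (u - xs) h Ωh)
    (ws : Fin n → ℝ) (hwsbin : ∀ i, ws i = 0 ∨ ws i = 1)
    (hwssum : ∑ i, ws i = (k : ℝ)) (hsupp : suppF xs ⊆ suppF ws) :
    nrm (restr (fun i => xs i - u i * w i) (suppF xs ∪ S')) ≤
      Real.sqrt ((1 + δ₁) / (1 - δ₂)) * nrm (fun i => (xs i - u i) * ws i) +
        2 / Real.sqrt (1 - δ₂) * nrm η +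
        2 * Real.sqrt ((1 + δ₁) / (1 - δ₂)) * nrm h := by
  have hd2 : 0 < 1 - δ₂ := by linarith [h2.2.1]
  have hs2 : 0 < Real.sqrt (1 - δ₂) := Real.sqrt_pos.2 hd2
  have hd1 : 0 ≤ 1 + δ₁ := by linarith [h1.1]
  set U := suppF xs ∪ S' with hU
  set r : Fin n → ℝ := fun i => xs i - u i * w i with hr
  have hUcard : U.card ≤ 2 * k := by
    have e1 : (suppF xs).card ≤ k := hxs
    have e2 := hS'.1
    have : U.card ≤ (suppF xs).card + S'.card := Finset.card_union_le (suppF xs) S'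
    omega
  have hlow := h2.lower (x := restr r U)
    (sparse_of_subset U hUcard fun i hi => by simp [restr, hi])
  have hxs0 : ∀ i ∉ suppF xs, xs i = 0 := by
    intro i hi
    simpa [suppF] using hi
  have hsplit : restr r U = r + fun i => restr (u - xs) Uᶜ i * w i := by
    funext i
    by_cases hi : i ∈ U
    · simp [restr, hi]
    · have : xs i = 0 := hxs0 i fun hc => hi (Finset.mem_union_left _ hc)
      simp [restr, hi, hr, this]
  have hoff := nrm_mulVec_off_le h1 hh Uᶜ w hwbd hwsum
  have hres : A.mulVec r = (y - A.mulVec (fun i => w i * u i)) - η := by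
    have : r = xs - fun i => w i * u i := by
      funext i; simp [hr, mul_comm]
    rw [this, Matrix.mulVec_sub, hη]; abel
  have hopt' : nrm (y - A.mulVec (fun i => w i * u i)) ≤
      nrm (y - A.mulVec (fun i => ws i * u i)) :=
    (sq_le_sq₀ (nrm_nonneg _) (nrm_nonneg _)).1 (hopt ws hwssum fun i => by
      rcases hwsbin i with e | e <;> simp [e])
  -- Since `ws = 1` on the support of `xs`, `xs = xs ⊗ ws`.
  have hcomp : y - A.mulVec (fun i => ws i * u i) =
      A.mulVec (fun i => (xs i - u i) * ws i) + η := by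
    have : (fun i => (xs i - u i) * ws i) = xs - fun i => ws i * u i := by
      funext i
      simp only [Pi.sub_apply]
      by_cases hi : i ∈ suppF xs
      · have h0 : ws i ≠ 0 := by simpa [suppF] using hsupp hi
        have h1 : ws i = 1 := (hwsbin i).resolve_left h0
        rw [h1]; ring
      · rw [hxs0 i hi]; ring
    rw [this, Matrix.mulVec_sub, hη]; abel
  have hwscard : (suppF ws).card = k := by
    have : ∀ i ∈ Finset.univ, ws i = if ws i ≠ 0 then (1 : ℝ) else 0 := by
      intro i _
      rcases hwsbin i with e | e <;> simp [e]
    rw [Finset.sum_congr rfl this, Finset.sum_boole] at hwssum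
    exact_mod_cast hwssum
  have hup := h1.upper (x := fun i => (xs i - u i) * ws i)
    (sparse_of_subset (suppF ws) hwscard.le fun i hi => by
      have : ws i = 0 := by simpa [suppF] using hi
      simp [this])
  have t1 : nrm (A.mulVec (restr r U)) ≤ nrm (A.mulVec r) +
      nrm (A.mulVec fun i => restr (u - xs) Uᶜ i * w i) := by
    rw [hsplit, Matrix.mulVec_add]; exact nrm_add_le _ _
  have t2 : nrm (A.mulVec r) ≤ nrm (y - A.mulVec (fun i => w i * u i)) + nrm η := by
    rw [hres]; exact nrm_sub_le _ _
  have t3 : nrm (y - A.mulVec (fun i => ws i * u i)) ≤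
      nrm (A.mulVec (fun i => (xs i - u i) * ws i)) + nrm η := by
    rw [hcomp]; exact nrm_add_le _ _
  have hpos : 0 ≤ Real.sqrt (1 + δ₁) * nrm h := mul_nonneg (Real.sqrt_nonneg _) (nrm_nonneg _)
  rw [Real.sqrt_div hd1]
  set a := nrm (fun i => (xs i - u i) * ws i)
  have key : Real.sqrt (1 - δ₂) * nrm (restr r U) ≤
      Real.sqrt (1 + δ₁) * a + 2 * nrm η + 2 * (Real.sqrt (1 + δ₁) * nrm h) := by linarith
  have : nrm (restr r U) ≤ (Real.sqrt (1 + δ₁) * a + 2 * nrm η +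
      2 * (Real.sqrt (1 + δ₁) * nrm h)) / Real.sqrt (1 - δ₂) := by
    rw [le_div_iff₀ hs2]; linarith
  refine this.trans_eq ?_
  field_simp
end

section
/- Let A ∈ ℝ^{m×n}, y ∈ ℝ^m, let x* and x^p be k-sparse vectors in ℝⁿ and set η = y − Ax*. Let q ≥ 2k be a positive integer, set t = ⌈q/k⌉, and let δ₁ ≤ δ₂ ≤ δ₃ be restricted isometry constants of orders k, 2k, 3k for A with δ₂ < 1. Let u^p = x^p + h^p, where h^p is a hard thresholding of Aᵀ(y − Ax^p) at level q, let w̄^p ∈ ℝⁿ with eᵀw̄^p = k and 0 ≤ w̄^p ≤ e minimize ‖y − A(w ⊗ u^p)‖₂² over all w with eᵀw = k and 0 ≤ w ≤ e, and let x^{p+1} be a hard thresholding of w̄^p ⊗ u^p at level k. Then ‖x^{p+1} − x*‖₂ ≤ ρ̄·‖x^p − x*‖₂ + τ̄·‖η‖₂, where ρ̄ = 3((√5+1)/2)²(t+1)δ₃√((1+δ₁)/(1−δ₂)) and τ̄ = ((√5+1)/2)²·3(t+1)(1+δ₁)/√(1−δ₂) + (√5+1)/√(1−δ₂). -/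
/-!
Write `u = xp + h`, `z = Aᵀ(y - A xp)`, `d = xp - xs`, `φ = (√5 + 1) / 2`, and
`E = δ₃ ‖d‖ + √(1 + δ₁) ‖η‖`. The proof combines three estimates.

* **The gradient step is good on every small set.** Since `d + z = (I - AᵀA) d + Aᵀη`, the
  restricted isometry property gives `‖(d + z)_T‖ ≤ E` whenever `|T| ≤ k` (`nrm_restr_grad_le`).
  On `Ω` the vector `u - xs` agrees with `d + z`. Off `Ω` it agrees with `d`, and there `d` is
  `(d + z) - z`, where the size of `z` is controlled by its entries on `Ω` outside the support of
  `d`, at which `z = d + z`. Hence `‖(u - xs)_T‖ ≤ 3E` for `|T| ≤ k` (`nrm_restr_step_le`).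
* **Optimality of `w`.** Let `S` be a `k`-element set containing the support of `xs`. Its indicator
  is a feasible weight, so `‖y - A(w ⊗ u)‖ ≤ ‖A (u - xs)_S‖ + ‖η‖`. The part of `w ⊗ u` outside
  `S ∪ Ω'` lives on at most `q + k ≤ (t + 1) k` indices, so it splits into `t + 1` blocks of size at
  most `k`, each of norm at most `3E` (`nrm_mulVec_restr_blocks`). Thus
  `√(1 - δ₂) ‖(w ⊗ u - xs)_{S ∪ Ω'}‖ ≤ (t + 2) √(1 + δ₁) 3E + 2 ‖η‖`.
* **Hard thresholding at level `k` costs a factor `φ`** on `S ∪ Ω'` (`nrm_hardThreshold_sub_le`).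

The result follows because `t + 2 ≤ φ (t + 1)` for `t ≥ 1`.
-/

open Matrix Finset Filter

lemma nrm_sq_dot {n : ℕ} (x : Fin n → ℝ) : nrm x ^ 2 = x ⬝ᵥ x := by
  rw [nrm_sq]; simp [dotProduct, sq]

lemma dot_le_nrm {n : ℕ} (x y : Fin n → ℝ) : x ⬝ᵥ y ≤ nrm x * nrm y := by
  simpa [dotProduct, nrm] using Real.sum_mul_le_sqrt_mul_sqrt Finset.univ x y

lemma nrm_restr_sq {n : ℕ} (x : Fin n → ℝ) (T : Finset (Fin n)) :
    nrm (restr x T) ^ 2 = ∑ i ∈ T, x i ^ 2 := by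
  simp [nrm_sq, restr, ite_pow, Finset.sum_ite_mem]

lemma sparse_of_support_subset {n s : ℕ} (x : Fin n → ℝ) (T : Finset (Fin n)) (hT : T.card ≤ s)
    (hx : ∀ i, x i ≠ 0 → i ∈ T) : sparse s x :=
  (Finset.card_le_card fun i hi => hx i (Finset.mem_filter.1 hi).2).trans hT

lemma sparse_restr {n s : ℕ} (x : Fin n → ℝ) (T : Finset (Fin n)) (hT : T.card ≤ s) :
    sparse s (restr x T) :=
  sparse_of_support_subset _ T hT fun i hi => by
    by_contra h; exact hi (by simp [restr, h])

lemma sum_sq_le_of_dominated {n : ℕ} (z : Fin n → ℝ) (P R : Finset (Fin n))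
    (hc : P.card ≤ R.card) (hz : ∀ i ∈ R, ∀ j ∈ P, |z j| ≤ |z i|) :
    ∑ j ∈ P, z j ^ 2 ≤ ∑ i ∈ R, z i ^ 2 := by
  rcases P.eq_empty_or_nonempty with rfl | hP
  · simpa using Finset.sum_nonneg fun i _ => sq_nonneg (z i)
  -- The largest entry over `P` separates the two sums.
  obtain ⟨p, hp, hmax⟩ := P.exists_max_image (fun i => z i ^ 2) hP
  calc ∑ j ∈ P, z j ^ 2 ≤ P.card • z p ^ 2 := Finset.sum_le_card_nsmul _ _ _ hmax
    _ ≤ R.card • z p ^ 2 := by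
        simp only [nsmul_eq_mul]
        exact mul_le_mul_of_nonneg_right (by exact_mod_cast hc) (sq_nonneg _)
    _ ≤ ∑ i ∈ R, z i ^ 2 :=
        Finset.card_nsmul_le_sum _ _ _ fun i hi => sq_le_sq.2 (hz i hi p hp)

/-! ### Consequences of the restricted isometry property -/

lemma RIC.nrm_mulVec_le {m n s : ℕ} {A : Matrix (Fin m) (Fin n) ℝ} {δ : ℝ} (hA : RIC A s δ)
    {x : Fin n → ℝ} (hx : sparse s x) : nrm (A.mulVec x) ≤ √(1 + δ) * nrm x := by
  have h0 := hA.1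
  refine le_of_sq_le_sq ?_ (mul_nonneg (Real.sqrt_nonneg _) (nrm_nonneg _))
  rw [mul_pow, Real.sq_sqrt (by linarith)]
  exact (hA.2.2 x hx).2

lemma RIC.le_nrm_mulVec {m n s : ℕ} {A : Matrix (Fin m) (Fin n) ℝ} {δ : ℝ} (hA : RIC A s δ)
    {x : Fin n → ℝ} (hx : sparse s x) : √(1 - δ) * nrm x ≤ nrm (A.mulVec x) := by
  have h0 := hA.2.1
  refine le_of_sq_le_sq ?_ (nrm_nonneg _)
  rw [mul_pow, Real.sq_sqrt (by linarith)]
  exact (hA.2.2 x hx).1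

/-- `‖((I - AᵀA) d)_T‖ ≤ δ ‖d‖` when `T` together with the support of `d` has at most `s` indices:
polarization of the restricted isometry inequalities. -/
lemma RIC.nrm_restr_sub_gram_le {m n s : ℕ} {A : Matrix (Fin m) (Fin n) ℝ} {δ : ℝ}
    (hA : RIC A s δ) (d : Fin n → ℝ) (T : Finset (Fin n)) (hc : (T ∪ suppF d).card ≤ s) :
    nrm (restr (d - Aᵀ.mulVec (A.mulVec d)) T) ≤ δ * nrm d := by
  obtain ⟨h0, -, hA⟩ := hA
  set g := restr (d - Aᵀ.mulVec (A.mulVec d)) T with hg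
  refine le_of_sq_le_sq ?_ (mul_nonneg h0 (nrm_nonneg _))
  have hsp : ∀ a : ℝ, sparse s (a • g + d) ∧ sparse s (a • g - d) := by
    intro a
    constructor <;>
    · refine sparse_of_support_subset _ _ hc fun i hi => ?_
      by_contra hcon
      simp only [Finset.mem_union, suppF, Finset.mem_filter, Finset.mem_univ, true_and,
        not_or, not_not] at hcon
      exact hi (by simp [hg, restr, hcon.1, hcon.2])
  have hinner : g ⬝ᵥ d - A.mulVec g ⬝ᵥ A.mulVec d = g ⬝ᵥ g := by
    have h1 : A.mulVec g ⬝ᵥ A.mulVec d = g ⬝ᵥ Aᵀ.mulVec (A.mulVec d) := by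
      rw [Matrix.mulVec_transpose, dotProduct_comm, Matrix.dotProduct_mulVec, dotProduct_comm]
    rw [h1, ← dotProduct_sub]
    simp only [dotProduct]
    refine Finset.sum_congr rfl fun i _ => ?_
    simp only [hg, restr]
    split_ifs <;> simp
  have hquad : ∀ a : ℝ, 0 ≤ (δ * nrm g ^ 2) * (a * a) + (-2 * nrm g ^ 2) * a + δ * nrm d ^ 2 := by
    intro a
    have e1 := (hA _ (hsp a).1).1
    have e2 := (hA _ (hsp a).2).2
    simp only [nrm_sq_dot, Matrix.mulVec_add, Matrix.mulVec_sub, Matrix.mulVec_smul,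
      dotProduct_add, add_dotProduct, dotProduct_sub, sub_dotProduct, smul_dotProduct,
      dotProduct_smul, smul_eq_mul] at e1 e2 hinner ⊢
    rw [dotProduct_comm d g, dotProduct_comm (A.mulVec d) (A.mulVec g)] at e1 e2
    have e3 : a * (g ⬝ᵥ d - A.mulVec g ⬝ᵥ A.mulVec d) = a * (g ⬝ᵥ g) := by rw [hinner]
    nlinarith [e1, e2, e3]
  have hdisc := discrim_le_zero hquad
  rw [discrim] at hdisc
  rcases (sq_nonneg (nrm g)).eq_or_lt with h | h
  · rw [← h]; positivity
  · refine le_of_mul_le_mul_left ?_ h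
    nlinarith [hdisc]

lemma RIC.nrm_restr_transpose_le {m n s : ℕ} {A : Matrix (Fin m) (Fin n) ℝ} {δ : ℝ}
    (hA : RIC A s δ) (η : Fin m → ℝ) (T : Finset (Fin n)) (hc : T.card ≤ s) :
    nrm (restr (Aᵀ.mulVec η) T) ≤ √(1 + δ) * nrm η := by
  set g := restr (Aᵀ.mulVec η) T with hg
  have h1 : nrm g ^ 2 = A.mulVec g ⬝ᵥ η := by
    rw [dotProduct_comm, Matrix.dotProduct_mulVec, ← Matrix.mulVec_transpose, nrm_sq_dot]
    simp only [dotProduct]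
    refine Finset.sum_congr rfl fun i _ => ?_
    simp only [hg, restr]
    split_ifs <;> simp
  have h2 := dot_le_nrm (A.mulVec g) η
  have h3 := hA.nrm_mulVec_le (sparse_restr (Aᵀ.mulVec η) T hc)
  rw [← hg] at h3
  have h4 := mul_le_mul_of_nonneg_right h3 (nrm_nonneg η)
  rcases (nrm_nonneg g).eq_or_lt with h | h
  · rw [← h]; exact mul_nonneg (Real.sqrt_nonneg _) (nrm_nonneg _)
  · refine le_of_mul_le_mul_left ?_ h
    nlinarith

/-- A vector supported on at most `r * k` indices is cut into `r` blocks of size at most `k`, to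
each of which the restricted isometry property of order `k` applies. -/
lemma nrm_mulVec_restr_blocks {m n k : ℕ} {A : Matrix (Fin m) (Fin n) ℝ} {δ : ℝ}
    (hA : RIC A k δ) (v : Fin n → ℝ) (M : ℝ)
    (hM : ∀ T : Finset (Fin n), T.card ≤ k → nrm (restr v T) ≤ M) (r : ℕ) :
    ∀ B : Finset (Fin n), B.card ≤ r * k → nrm (A.mulVec (restr v B)) ≤ r * (√(1 + δ) * M) := by
  induction r with
  | zero =>
    intro B hB
    have hB : B = ∅ := by simpa using hB
    have : restr v B = 0 := by ext i; simp [restr, hB]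
    simp [this, nrm]
  | succ r ih =>
    intro B hB
    obtain ⟨C, hCB, hC⟩ := Finset.exists_subset_card_eq (min_le_right k B.card)
    have hsplit : restr v B = restr v C + restr v (B \ C) := by
      ext i
      by_cases h1 : i ∈ C
      · simp [restr, h1, hCB h1]
      · simp [restr, h1]
    have hC1 : C.card ≤ k := by omega
    have hC2 : (B \ C).card ≤ r * k := by
      rw [Finset.card_sdiff_of_subset hCB]
      rw [Nat.succ_mul] at hB
      omega
    rw [hsplit, Matrix.mulVec_add]
    have e1 := nrm_add_le (A.mulVec (restr v C)) (A.mulVec (restr v (B \ C)))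
    have e2 := hA.nrm_mulVec_le (sparse_restr v C hC1)
    have e3 := mul_le_mul_of_nonneg_left (hM C hC1) (Real.sqrt_nonneg (1 + δ))
    have e4 := ih _ hC2
    push_cast
    linarith

/-! ### Hard thresholding -/

/-- Hard thresholding at level `k` loses at most the golden ratio, measured on the union of the
selected set `Ω'` and a set `S` of at most `k` indices carrying the target `x`. -/
lemma nrm_hardThreshold_sub_le {n k : ℕ} (v x x' : Fin n → ℝ) (S Ω' : Finset (Fin n))
    (hS : S.card ≤ k) (hx : ∀ i ∉ S, x i = 0) (hHT : IsHT k v x' Ω') :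
    nrm (x' - x) ≤ (√5 + 1) / 2 * nrm (restr (v - x) (S ∪ Ω')) := by
  obtain ⟨hcard, hon, hoff, hdom⟩ := hHT
  have h5 : √5 ^ 2 = 5 := Real.sq_sqrt (by norm_num)
  have h5n : 1 ≤ √5 := by nlinarith [Real.sqrt_nonneg 5]
  -- The error vanishes outside `S ∪ Ω'` and splits over `S ∩ Ω'`, `Ω' \ S` and `S \ Ω'`.
  have hU : S ∪ Ω' = Ω' ∪ (S \ Ω') := by
    ext i; simp only [Finset.mem_union, Finset.mem_sdiff]; tauto
  have hUd : Disjoint Ω' (S \ Ω') := Finset.disjoint_sdiff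
  have hLHS : nrm (x' - x) ^ 2 = ∑ i ∈ Ω', (v - x) i ^ 2 + nrm (restr x (S \ Ω')) ^ 2 := by
    rw [nrm_restr_sq, nrm_sq,
      ← Finset.sum_subset (Finset.subset_univ (S ∪ Ω')), hU, Finset.sum_union hUd]
    · congr 1
      · exact Finset.sum_congr rfl fun i hi => by simp [hon i hi]
      · exact Finset.sum_congr rfl fun i hi => by simp [hoff i (Finset.mem_sdiff.1 hi).2]
    · intro i _ hi
      simp only [Finset.mem_union, not_or] at hi
      simp [hoff i hi.2, hx i hi.1]
  have hRHS : nrm (restr (v - x) (S ∪ Ω')) ^ 2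
      = ∑ i ∈ Ω', (v - x) i ^ 2 + nrm (restr (v - x) (S \ Ω')) ^ 2 := by
    rw [nrm_restr_sq, nrm_restr_sq, hU, Finset.sum_union hUd]
  have hlow : nrm (restr v (Ω' \ S)) ^ 2 ≤ ∑ i ∈ Ω', (v - x) i ^ 2 := by
    rw [nrm_restr_sq]
    calc ∑ i ∈ Ω' \ S, v i ^ 2 = ∑ i ∈ Ω' \ S, (v - x) i ^ 2 :=
          Finset.sum_congr rfl fun i hi => by simp [hx i (Finset.mem_sdiff.1 hi).2]
      _ ≤ _ := Finset.sum_le_sum_of_subset_of_nonneg Finset.sdiff_subset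
          fun _ _ _ => sq_nonneg _
  have hswap : nrm (restr v (S \ Ω')) ≤ nrm (restr v (Ω' \ S)) := by
    refine le_of_sq_le_sq ?_ (nrm_nonneg _)
    rw [nrm_restr_sq, nrm_restr_sq]
    refine sum_sq_le_of_dominated _ _ _ ?_ fun i hi j hj =>
      hdom i (Finset.mem_sdiff.1 hi).1 j (Finset.mem_sdiff.1 hj).2
    have a1 := Finset.card_sdiff_add_card_inter S Ω'
    have a2 := Finset.card_sdiff_add_card_inter Ω' S
    rw [Finset.inter_comm] at a2
    omega
  have htri : nrm (restr x (S \ Ω'))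
      ≤ nrm (restr v (S \ Ω')) + nrm (restr (v - x) (S \ Ω')) := by
    have : restr x (S \ Ω') = restr v (S \ Ω') - restr (v - x) (S \ Ω') := by
      ext i; by_cases hi : i ∈ S \ Ω' <;> simp only [restr, hi, Pi.sub_apply] <;> simp
    rw [this]
    exact nrm_sub_le _ _
  refine le_of_sq_le_sq ?_ (mul_nonneg (by linarith) (nrm_nonneg _))
  rw [mul_pow, hLHS, hRHS]
  generalize ∑ i ∈ Ω', (v - x) i ^ 2 = P at *
  have hC0 := nrm_nonneg (restr (v - x) (S \ Ω'))
  have hB0 := nrm_nonneg (restr v (Ω' \ S))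
  have hX0 := nrm_nonneg (restr x (S \ Ω'))
  generalize nrm (restr (v - x) (S \ Ω')) = C at *
  generalize nrm (restr v (Ω' \ S)) = B at *
  generalize nrm (restr x (S \ Ω')) = X at *
  have hX : X ^ 2 ≤ (B + C) ^ 2 := pow_le_pow_left₀ hX0 (by linarith) 2
  have hφ : ((√5 + 1) / 2) ^ 2 = (√5 + 1) / 2 + 1 := by nlinarith
  rw [hφ]
  -- With `φ ^ 2 = φ + 1` the form `(φ - 1) B² - 2 B C + φ C²` is a nonnegative multiple of
  -- `(B - φ C)²`, and `B² ≤ P`.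
  have hkey : 0 ≤ (√5 - 1) / 2 * (B - (√5 + 1) / 2 * C) ^ 2 :=
    mul_nonneg (by linarith) (sq_nonneg _)
  have hexp : (√5 - 1) / 2 * (B - (√5 + 1) / 2 * C) ^ 2
      = (√5 - 1) / 2 * B ^ 2 - 2 * B * C + (√5 + 1) / 2 * C ^ 2 := by
    linear_combination (-(B * C) / 2 + (√5 + 1) / 8 * C ^ 2) * h5
  have hP : (√5 - 1) / 2 * B ^ 2 ≤ (√5 - 1) / 2 * P :=
    mul_le_mul_of_nonneg_left hlow (by linarith)
  nlinarith

/-! ### The gradient step -/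

/-- The residual of one gradient step, `d + Aᵀ(η - A d) = (I - AᵀA) d + Aᵀη`, is small on every set
of `k` indices. -/
lemma nrm_restr_grad_le {m n k : ℕ} {A : Matrix (Fin m) (Fin n) ℝ} {δ₁ δ₃ : ℝ}
    (h1 : RIC A k δ₁) (h3 : RIC A (3 * k) δ₃) (d : Fin n → ℝ) (hd : (suppF d).card ≤ 2 * k)
    (η : Fin m → ℝ) (T : Finset (Fin n)) (hT : T.card ≤ k) :
    nrm (restr (d + Aᵀ.mulVec (η - A.mulVec d)) T) ≤ δ₃ * nrm d + √(1 + δ₁) * nrm η := by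
  have hsplit : restr (d + Aᵀ.mulVec (η - A.mulVec d)) T
      = restr (d - Aᵀ.mulVec (A.mulVec d)) T + restr (Aᵀ.mulVec η) T := by
    rw [Matrix.mulVec_sub]
    ext i; by_cases hi : i ∈ T
    · simp only [restr, hi, Pi.add_apply, Pi.sub_apply, if_true]; ring
    · simp [restr, hi]
  rw [hsplit]
  refine (nrm_add_le _ _).trans (add_le_add (h3.nrm_restr_sub_gram_le d T ?_)
    (h1.nrm_restr_transpose_le η T hT))
  have := Finset.card_union_le T (suppF d)
  omega

/-- If `d + z` has norm at most `E` on all sets of at most `k` indices and `h` is a hard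
thresholding of `z` at a level `q ≥ 2k`, at least the sparsity of `d`, then `d + h` has norm at most
`3E` on such sets. -/
lemma nrm_restr_step_le {n k q : ℕ} (hq : 2 * k ≤ q) (d z h : Fin n → ℝ) (Ω : Finset (Fin n))
    (hHT : IsHT q z h Ω) (hd : (suppF d).card ≤ 2 * k) (E : ℝ)
    (hE : ∀ T : Finset (Fin n), T.card ≤ k → nrm (restr (d + z) T) ≤ E)
    (T : Finset (Fin n)) (hT : T.card ≤ k) :
    nrm (restr (d + h) T) ≤ 3 * E := by
  obtain ⟨hcard, hon, hoff, hdom⟩ := hHT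
  set D := (T \ Ω) ∩ suppF d with hD
  have hDT : D.card ≤ k :=
    (Finset.card_le_card (Finset.inter_subset_left.trans Finset.sdiff_subset)).trans hT
  -- `R` trades the missed support indices `D` for selected indices off the support of `d`.
  have hDR : D.card ≤ (Ω \ suppF d).card := by
    have a1 := Finset.card_sdiff_add_card_inter Ω (suppF d)
    have a2 := Finset.card_sdiff_add_card_inter (suppF d) Ω
    rw [Finset.inter_comm] at a2
    have a3 : D.card ≤ (suppF d \ Ω).card := Finset.card_le_card fun i hi => by
      simp only [hD, Finset.mem_inter, Finset.mem_sdiff] at hi ⊢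
      exact ⟨hi.2, hi.1.2⟩
    omega
  obtain ⟨R, hRs, hRc⟩ := Finset.exists_subset_card_eq hDR
  have hR0 : restr z R = restr (d + z) R := by
    ext i
    by_cases hi : i ∈ R
    · have := (Finset.mem_sdiff.1 (hRs hi)).2
      simp only [suppF, Finset.mem_filter, Finset.mem_univ, true_and, not_not] at this
      simp [restr, hi, this]
    · simp [restr, hi]
  have hzD : nrm (restr z D) ≤ nrm (restr z R) := by
    refine le_of_sq_le_sq ?_ (nrm_nonneg _)
    rw [nrm_restr_sq, nrm_restr_sq]
    refine sum_sq_le_of_dominated _ _ _ hRc.ge fun i hi j hj =>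
      hdom i (Finset.mem_sdiff.1 (hRs hi)).1 j ?_
    simp only [hD, Finset.mem_inter, Finset.mem_sdiff] at hj
    exact hj.1.2
  have hsplit : restr (d + h) T
      = restr (d + z) (T ∩ Ω) + (restr (d + z) D - restr z D) := by
    ext i
    by_cases hi : i ∈ T <;> by_cases hj : i ∈ Ω <;> by_cases hk : d i = 0 <;>
      simp [restr, hD, suppF, hi, hj, hk, hon, hoff]
  rw [hsplit]
  have e1 := nrm_add_le (restr (d + z) (T ∩ Ω)) (restr (d + z) D - restr z D)
  have e2 := nrm_sub_le (restr (d + z) D) (restr z D)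
  have e3 := hE (T ∩ Ω) ((Finset.card_le_card Finset.inter_subset_left).trans hT)
  have e4 := hE D hDT
  have e5 := hE R (by omega)
  rw [← hR0] at e5
  linarith

/-! ### The convergence estimate -/

theorem stmt18 {m n : ℕ} (k q : ℕ) (hk : 0 < k) (hq : 2 * k ≤ q)
    (A : Matrix (Fin m) (Fin n) ℝ) (y : Fin m → ℝ)
    (xs xp : Fin n → ℝ) (hxs : sparse k xs) (hxp : sparse k xp)
    (η : Fin m → ℝ) (hη : η = y - A.mulVec xs)
    (t : ℕ) (ht : t = ⌈(q : ℝ) / (k : ℝ)⌉₊)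
    (δ₁ δ₂ δ₃ : ℝ) (h1 : RIC A k δ₁) (h2 : RIC A (2 * k) δ₂) (h3 : RIC A (3 * k) δ₃)
    (h12 : δ₁ ≤ δ₂) (h23 : δ₂ ≤ δ₃)
    (h : Fin n → ℝ) (Ω : Finset (Fin n))
    (hHT : IsHT q (Aᵀ.mulVec (y - A.mulVec xp)) h Ω)
    (w : Fin n → ℝ) (hwsum : ∑ i, w i = (k : ℝ)) (hwbd : ∀ i, 0 ≤ w i ∧ w i ≤ 1)
    (hopt : ∀ w' : Fin n → ℝ, (∑ i, w' i) = (k : ℝ) → (∀ i, 0 ≤ w' i ∧ w' i ≤ 1) →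
      nrm (y - A.mulVec (fun i => w i * (xp i + h i))) ^ 2 ≤
        nrm (y - A.mulVec (fun i => w' i * (xp i + h i))) ^ 2)
    (xnext : Fin n → ℝ) (Ω' : Finset (Fin n))
    (hxnext : IsHT k (fun i => w i * (xp i + h i)) xnext Ω')
    (ρ τ : ℝ)
    (hρ : ρ = 3 * ((Real.sqrt 5 + 1) / 2) ^ 2 * ((t : ℝ) + 1) * δ₃ *
      Real.sqrt ((1 + δ₁) / (1 - δ₂)))
    (hτ : τ = ((Real.sqrt 5 + 1) / 2) ^ 2 * (3 * ((t : ℝ) + 1) * (1 + δ₁)) /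
      Real.sqrt (1 - δ₂) + (Real.sqrt 5 + 1) / Real.sqrt (1 - δ₂)) :
    nrm (xnext - xs) ≤ ρ * nrm (xp - xs) + τ * nrm η := by
  set d := xp - xs with hd
  set z := Aᵀ.mulVec (y - A.mulVec xp) with hz
  set v : Fin n → ℝ := fun i => w i * (xp i + h i) with hv
  have hzη : z = Aᵀ.mulVec (η - A.mulVec d) := by
    rw [hz, hη, hd, Matrix.mulVec_sub A]; congr 1; abel
  have hsupp : (suppF d).card ≤ 2 * k := by
    have hsub : suppF d ⊆ suppF xp ∪ suppF xs := fun i hi => by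
      simp only [suppF, Finset.mem_union, Finset.mem_filter, Finset.mem_univ, true_and, hd,
        Pi.sub_apply] at hi ⊢
      by_contra hcon
      simp only [not_or, not_not] at hcon
      exact hi (by simp [hcon.1, hcon.2])
    have a1 := (Finset.card_le_card hsub).trans (Finset.card_union_le _ _)
    have a2 : (suppF xp).card ≤ k := hxp
    have a3 : (suppF xs).card ≤ k := hxs
    omega
  set E := δ₃ * nrm d + √(1 + δ₁) * nrm η with hE
  have hδ1 := h1.1
  have hδ3 := h3.1
  have hE0 : 0 ≤ E := add_nonneg (mul_nonneg hδ3 (nrm_nonneg _))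
    (mul_nonneg (Real.sqrt_nonneg _) (nrm_nonneg _))
  have hstep : ∀ T : Finset (Fin n), T.card ≤ k → nrm (restr (d + h) T) ≤ 3 * E :=
    nrm_restr_step_le hq d z h Ω hHT hsupp E fun T hT => by
      rw [hzη]; exact nrm_restr_grad_le h1 h3 d hsupp η T hT
  -- A set of exactly `k` indices containing the support of `xs`; it exists as `k ≤ q = |Ω| ≤ n`.
  obtain ⟨S, hSsub, -, hScard⟩ := Finset.exists_subsuperset_card_eq
    (Finset.subset_univ (suppF xs)) (show (suppF xs).card ≤ k from hxs) (by
      have := Finset.card_le_univ Ω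
      rw [hHT.1] at this
      rw [Finset.card_univ]
      omega : k ≤ (Finset.univ : Finset (Fin n)).card)
  have hxsS : ∀ i ∉ S, xs i = 0 := fun i hi => by
    by_contra hne
    exact hi (hSsub (by simp [suppF, hne]))
  -- Comparing `w` with the indicator of `S`.
  have hopt1 : nrm (y - A.mulVec v) ≤ √(1 + δ₁) * (3 * E) + nrm η := by
    have o := hopt (fun i => if i ∈ S then 1 else 0) (by simp [hScard]) (fun i => by split_ifs <;> norm_num)
    have o := le_of_sq_le_sq o (nrm_nonneg _)
    have heq : (fun i => (if i ∈ S then (1 : ℝ) else 0) * (xp i + h i))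
        = xs + restr (d + h) S := by
      ext i
      by_cases hi : i ∈ S
      · simp only [hi, if_true, restr, hd, Pi.add_apply, Pi.sub_apply]; ring
      · simp [hi, restr, hxsS i hi]
    rw [heq, Matrix.mulVec_add, ← sub_sub, ← hη] at o
    have o2 := nrm_sub_le η (A.mulVec (restr (d + h) S))
    have o3 := h1.nrm_mulVec_le (sparse_restr (d + h) S hScard.le)
    have o4 := mul_le_mul_of_nonneg_left (hstep S hScard.le) (Real.sqrt_nonneg (1 + δ₁))
    linarith
  -- `w ⊗ u` vanishes off `suppF xp ∪ Ω`, so its part off `S ∪ Ω'` has at most `q + k` entries.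
  set V := (suppF xp ∪ Ω) \ (S ∪ Ω') with hV
  have hkR : (0 : ℝ) < k := by exact_mod_cast hk
  have hqt : q ≤ t * k := by
    have := Nat.le_ceil ((q : ℝ) / (k : ℝ))
    rw [← ht, div_le_iff₀ hkR] at this
    exact_mod_cast this
  have hVcard : V.card ≤ (t + 1) * k := by
    have a1 : V.card ≤ (suppF xp ∪ Ω).card := Finset.card_le_card Finset.sdiff_subset
    have a2 := Finset.card_union_le (suppF xp) Ω
    have a3 : (suppF xp).card ≤ k := hxp
    have a4 := hHT.1
    rw [Nat.succ_mul]
    omega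
  have hblock : nrm (A.mulVec (restr (w * (d + h)) V)) ≤ (t + 1 : ℕ) * (√(1 + δ₁) * (3 * E)) := by
    refine nrm_mulVec_restr_blocks h1 _ _ (fun T hT => ?_) _ V hVcard
    refine le_trans (le_of_sq_le_sq ?_ (nrm_nonneg _)) (hstep T hT)
    rw [nrm_restr_sq, nrm_restr_sq]
    refine Finset.sum_le_sum fun i _ => ?_
    rw [Pi.mul_apply, mul_pow]
    exact mul_le_of_le_one_left (sq_nonneg _) (pow_le_one₀ (hwbd i).1 (hwbd i).2)
  have hdecomp : restr (v - xs) (S ∪ Ω') = (v - xs) - restr (w * (d + h)) V := by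
    ext i
    by_cases hi : i ∈ S ∪ Ω'
    · simp [restr, hV, hi]
    · have hi' := hi
      simp only [Finset.mem_union, not_or] at hi'
      have hx0 := hxsS i hi'.1
      by_cases hj : i ∈ suppF xp ∪ Ω
      · have hiV : i ∈ V := Finset.mem_sdiff.2 ⟨hj, hi⟩
        simp [restr, hi, hiV, hv, hd, hx0]
      · have hiV : i ∉ V := fun hc => hj (Finset.mem_sdiff.1 hc).1
        simp only [Finset.mem_union, not_or, suppF, Finset.mem_filter, Finset.mem_univ, true_and,
          not_not] at hj
        simp [restr, hi, hiV, hv, hx0, hj.1, hHT.2.2.1 i hj.2]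
  have hlow : √(1 - δ₂) * nrm (restr (v - xs) (S ∪ Ω'))
      ≤ (t + 2) * (√(1 + δ₁) * (3 * E)) + 2 * nrm η := by
    have hc : (S ∪ Ω').card ≤ 2 * k := by
      have a1 := Finset.card_union_le S Ω'
      have a2 := hxnext.1
      omega
    have a := h2.le_nrm_mulVec (sparse_restr (v - xs) (S ∪ Ω') hc)
    have heq : A.mulVec (restr (v - xs) (S ∪ Ω'))
        = (η - (y - A.mulVec v)) - A.mulVec (restr (w * (d + h)) V) := by
      rw [hdecomp, Matrix.mulVec_sub, Matrix.mulVec_sub, hη]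
      congr 1; abel
    rw [heq] at a
    have b := nrm_sub_le (η - (y - A.mulVec v)) (A.mulVec (restr (w * (d + h)) V))
    have c := nrm_sub_le η (y - A.mulVec v)
    push_cast at hblock
    linarith
  have hHTk := nrm_hardThreshold_sub_le v xs xnext S Ω' hScard.le hxsS hxnext
  have h5 : √5 ^ 2 = 5 := Real.sq_sqrt (by norm_num)
  have h5n : 2 ≤ √5 := Real.le_sqrt_of_sq_le (by norm_num)
  have hs2 : 0 < √(1 - δ₂) := Real.sqrt_pos.2 (by linarith [h2.2.1])
  have ht1 : (1 : ℝ) ≤ t := by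
    have : 1 ≤ t := by
      by_contra hcon
      have h0 : t = 0 := by omega
      rw [h0] at hqt
      omega
    exact_mod_cast this
  have htφ : (t : ℝ) + 2 ≤ (√5 + 1) / 2 * (t + 1) := by nlinarith
  have hs1 : √(1 + δ₁) * √(1 + δ₁) = 1 + δ₁ := Real.mul_self_sqrt (by linarith)
  have hM0 : 0 ≤ √(1 + δ₁) * (3 * E) := mul_nonneg (Real.sqrt_nonneg _) (by linarith)
  have hfin := mul_le_mul_of_nonneg_right htφ hM0
  rw [hρ, hτ, Real.sqrt_div (by linarith)]
  calc nrm (xnext - xs) ≤ (√5 + 1) / 2 * nrm (restr (v - xs) (S ∪ Ω')) := hHTk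
    _ ≤ (√5 + 1) / 2 * (((√5 + 1) / 2 * (t + 1) * (√(1 + δ₁) * (3 * E)) + 2 * nrm η)
          / √(1 - δ₂)) := by
        refine mul_le_mul_of_nonneg_left ?_ (by linarith)
        rw [le_div_iff₀ hs2]
        linarith
    _ = _ := by
        rw [hE]
        generalize √(1 + δ₁) = a at *
        rw [← hs1]
        field_simp
        ring
end
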